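/- Let f and g be analytic on the unit disk 𝔻 with f(0) = g(0) = 0, f'(0) = g'(0) = 1, and f, g nonvanishing on the punctured disk 0 < |z| < 1. Suppose f belongs to 𝒫(1/2) ∪ 𝒞 ∪ 𝒮*(1/2) and Re g'(z) > 0 for all z ∈ 𝔻. Let r₄ ≈ 0.36027 be the unique root in (0,1) of 2r − 3 + (2(3r − 2)/r)·log(1 − r) = 0. Then the function F(z) = z^3/(f(z)g(z)) satisfies |F'(z)(z/F(z))^2 − 1| < 1 for every z with 0 < |z| < r₄; in particular F belongs to the class 𝒰 in the disk |z| < r₄. -/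

import Mathlib

/-!
Write `p = f z / z = ∑ aₖ zᵏ` and `q = g z / z = ∑ bₗ zˡ`. Since `z / F = p q`, one has
`U_F = p q - z (p q)' - 1 = 3 p q - f' q - p g' - 1`, and expanding as a double series,
`U_F = ∑ (1 - k - l) aₖ bₗ z ^ (k + l)` over `(k, l) ≠ (0, 0)`.

Each of the three classes for `f` forces `|aₖ| ≤ 1`, and `Re g' > 0` forces `|bₗ| ≤ 2 / (l + 1)` for
`l ≥ 1`. Hence, with `β₀ = 1` and `βₗ = 2 / (l + 1)`, `|U_F(z)|` is at most
`∑ (k + l - 1) βₗ |z| ^ (k + l)` over `(k, l) ≠ (0, 0)`. This majorant increases strictly with `|z|` and sums in closed form; its value is `1`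
exactly when `|z|` is a root of the equation defining `r₄` (`hasSum_majorant`).

The coefficient bounds come from one principle (`coeff_bound_of_convex`): averaging a function with
values in a convex set over the rotations by `n`-th roots of unity isolates the `n`-th coefficient,
which is then controlled by the Schwarz lemma. Applied to half-planes it gives Carathéodory's bound,
which settles `𝒫(1/2)` and `ℛ` and, through a recursion, `𝒮*(1/2)`. Applied to the image of a convex
function, with the inverse function as the map to the disk, it settles `𝒞`.
-/

/-- The class ℙ(1/2): normalized analytic functions with Re(h(z)/z) > 1/2 on the unit disk. -/
def IsClassPHalf (h : ℂ → ℂ) : Prop :=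
  ∀ z ∈ Metric.ball (0:ℂ) 1, z ≠ 0 → 1 / 2 < (h z / z).re

/-- The class 𝒞 of convex univalent functions: injective with convex image. -/
def IsClassConvex (h : ℂ → ℂ) : Prop :=
  Set.InjOn h (Metric.ball (0:ℂ) 1) ∧ Convex ℝ (h '' Metric.ball (0:ℂ) 1)

/-- The class 𝒮*(1/2) of starlike functions of order 1/2. -/
def IsClassStarlikeHalf (h : ℂ → ℂ) : Prop :=
  (∀ z : ℂ, 0 < ‖z‖ → ‖z‖ < 1 → h z ≠ 0) ∧
    ∀ z ∈ Metric.ball (0:ℂ) 1, z ≠ 0 → 1 / 2 < (z * deriv h z / h z).re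

/-! ### Power series on the unit disk -/

/-- `HasCoeffs f c` says that `f` is the sum of the power series `∑ cₙ zⁿ` on the open unit disk. -/
def HasCoeffs (f : ℂ → ℂ) (c : ℕ → ℂ) : Prop :=
  ∀ z : ℂ, ‖z‖ < 1 → HasSum (fun n => c n * z ^ n) (f z)

namespace HasCoeffs

theorem hasFPowerSeriesOnBall {f : ℂ → ℂ} {c : ℕ → ℂ} (h : HasCoeffs f c) :
    HasFPowerSeriesOnBall f (FormalMultilinearSeries.ofScalars ℂ c) 0 1 := by
  refine ⟨?_, one_pos, ?_⟩
  · refine ENNReal.le_of_forall_nnreal_lt fun r hr => ?_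
    have hr1 : (r : ℝ) < 1 := by exact_mod_cast hr
    have hs := (h (r : ℝ) (by simpa using hr1)).summable.tendsto_atTop_zero.norm
    refine FormalMultilinearSeries.le_radius_of_tendsto (l := 0) _ ?_
    simpa [FormalMultilinearSeries.ofScalars_norm] using hs
  · intro y hy
    have hy1 : ‖y‖ < 1 := by
      simpa [Metric.mem_eball, edist_zero_right, enorm_eq_nnnorm, ← NNReal.coe_lt_coe] using hy
    simpa [FormalMultilinearSeries.ofScalars_apply_eq, mul_comm] using h y hy1

theorem differentiableOn {f : ℂ → ℂ} {c : ℕ → ℂ} (h : HasCoeffs f c) :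
    DifferentiableOn ℂ f (Metric.ball 0 1) := by
  have := h.hasFPowerSeriesOnBall.differentiableOn
  rwa [← ENNReal.ofReal_one, Metric.eball_ofReal] at this

theorem unique {f : ℂ → ℂ} {c c' : ℕ → ℂ} (h : HasCoeffs f c) (h' : HasCoeffs f c') : c = c' :=
  FormalMultilinearSeries.ofScalars_series_injective ℂ ℂ
    (h.hasFPowerSeriesOnBall.hasFPowerSeriesAt.eq_formalMultilinearSeries
      h'.hasFPowerSeriesOnBall.hasFPowerSeriesAt)

/-- A function holomorphic on the unit disk is the sum of its Taylor series there. -/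
theorem of_differentiableOn {f : ℂ → ℂ} (hf : DifferentiableOn ℂ f (Metric.ball 0 1)) :
    HasCoeffs f (fun n => (n.factorial : ℂ)⁻¹ * iteratedDeriv n f 0) := by
  intro z hz
  have := Complex.hasSum_taylorSeries_on_ball hf (z := z) (by simpa using hz)
  simpa [mul_assoc, mul_comm, mul_left_comm] using this

theorem apply_zero {f : ℂ → ℂ} {c : ℕ → ℂ} (h : HasCoeffs f c) : f 0 = c 0 := by
  rw [h.unique (of_differentiableOn h.differentiableOn)]
  simp

theorem deriv_zero {f : ℂ → ℂ} {c : ℕ → ℂ} (h : HasCoeffs f c) : deriv f 0 = c 1 := by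
  rw [h.unique (of_differentiableOn h.differentiableOn)]
  simp

theorem deriv {f : ℂ → ℂ} {c : ℕ → ℂ} (h : HasCoeffs f c) :
    HasCoeffs (deriv f) (fun n => (n + 1) * c (n + 1)) := by
  have h1 := of_differentiableOn (h.differentiableOn.deriv Metric.isOpen_ball)
  convert h1 using 2 with n
  rw [h.unique (of_differentiableOn h.differentiableOn)]
  have : ((n : ℂ) + 1) ≠ 0 := by exact_mod_cast n.succ_ne_zero
  simp only [iteratedDeriv_succ', Nat.factorial_succ]
  push_cast
  field_simp

/-- `dslope f 0` is `(f z - f 0) / z`, extended by `f' 0` at the origin. -/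
theorem dslope {f : ℂ → ℂ} {c : ℕ → ℂ} (h : HasCoeffs f c) :
    HasCoeffs (dslope f 0) (fun n => c (n + 1)) := by
  have hf0 := h.apply_zero
  intro z hz
  rcases eq_or_ne z 0 with rfl | hz0
  · rw [dslope_same, h.deriv_zero]
    convert hasSum_single 0 ?_ using 1
    · simp
    · intro n hn; simp [hn]
  · rw [dslope_of_ne _ hz0, slope_def_field, hf0, sub_zero]
    have := ((hasSum_nat_add_iff' 1).2 (h z hz)).div_const z
    simp only [Finset.sum_range_one, pow_zero, mul_one] at this
    have e : (fun n => c (n + 1) * z ^ n) = fun n => c (n + 1) * z ^ (n + 1) / z := by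
      ext n
      rw [pow_succ]
      field_simp
    rwa [e]

theorem summable_norm {f : ℂ → ℂ} {c : ℕ → ℂ} (h : HasCoeffs f c) {z : ℂ} (hz : ‖z‖ < 1) :
    Summable fun n => ‖c n * z ^ n‖ :=
  (h z hz).summable.norm

theorem mul {f g : ℂ → ℂ} {a b : ℕ → ℂ} (hf : HasCoeffs f a) (hg : HasCoeffs g b) :
    HasCoeffs (fun z => f z * g z)
      (fun n => ∑ k ∈ Finset.range (n + 1), a k * b (n - k)) := by
  intro z hz
  have hs := (summable_norm_sum_mul_range_of_summable_norm
    (hf.summable_norm hz) (hg.summable_norm hz)).of_norm.hasSum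
  rw [← tsum_mul_tsum_eq_tsum_sum_range_of_summable_norm
    (hf.summable_norm hz) (hg.summable_norm hz), (hf z hz).tsum_eq, (hg z hz).tsum_eq] at hs
  have e : (fun n => (∑ k ∈ Finset.range (n + 1), a k * b (n - k)) * z ^ n) =
      fun n => ∑ k ∈ Finset.range (n + 1), a k * z ^ k * (b (n - k) * z ^ (n - k)) := by
    ext n
    rw [Finset.sum_mul]
    refine Finset.sum_congr rfl fun k hk => ?_
    have : z ^ n = z ^ k * z ^ (n - k) := by
      rw [← pow_add, Nat.add_sub_cancel' (Nat.lt_succ_iff.1 (Finset.mem_range.1 hk))]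
    rw [this]; ring
  simp only [e]
  exact hs

end HasCoeffs

/-! ### Coefficient bounds by averaging over roots of unity -/

/-- Coefficient bound for a function with values in a convex set `K`. If `Φ` is holomorphic on `K`,
maps `K` into the closed unit disk and sends `G 0 = c 0` to `0`, then averaging `G` over the rotations
by the `n`-th roots of unity gives a function `B (w ^ n)`, where `B v = ∑ c (n * j) * v ^ j` still
takes its values in `K`; the Schwarz lemma for `Φ ∘ B` bounds `(Φ ∘ B)' 0 = Φ' (c 0) * c n`. -/
theorem coeff_bound_of_convex {G : ℂ → ℂ} {c : ℕ → ℂ} (hG : HasCoeffs G c) {K : Set ℂ}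
    (hK : Convex ℝ K) (hGK : ∀ z : ℂ, ‖z‖ < 1 → G z ∈ K) {Φ : ℂ → ℂ} {d : ℂ}
    (hΦ : ∀ w ∈ K, DifferentiableAt ℂ Φ w) (hΦK : ∀ w ∈ K, ‖Φ w‖ ≤ 1) (hΦ0 : Φ (c 0) = 0)
    (hd : HasDerivAt Φ d (c 0)) {n : ℕ} (hn : n ≠ 0) : ‖d * c n‖ ≤ 1 := by
  obtain ⟨ζ, hζ⟩ : ∃ ζ : ℂ, IsPrimitiveRoot ζ n := ⟨_, Complex.isPrimitiveRoot_exp n hn⟩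
  have hζ1 : ‖ζ‖ = 1 := hζ.norm'_eq_one hn
  have hnC : (n : ℂ) ≠ 0 := by exact_mod_cast hn
  have key : ∀ w : ℂ, ‖w‖ < 1 → HasSum (fun j => c (n * j) * (w ^ n) ^ j)
      (∑ k ∈ Finset.range n, ((n : ℝ)⁻¹) • G (ζ ^ k * w)) := by
    intro w hw
    have h1 : HasSum (fun m => ∑ k ∈ Finset.range n, ((n : ℝ)⁻¹) • (c m * (ζ ^ k * w) ^ m))
        (∑ k ∈ Finset.range n, ((n : ℝ)⁻¹) • G (ζ ^ k * w)) := by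
      refine hasSum_sum fun k _ => (hG _ ?_).const_smul _
      simpa [hζ1] using hw
    have h2 : ∀ m, ∑ k ∈ Finset.range n, ((n : ℝ)⁻¹) • (c m * (ζ ^ k * w) ^ m)
        = (n : ℂ)⁻¹ * (c m * w ^ m) * ∑ k ∈ Finset.range n, (ζ ^ m) ^ k := by
      intro m
      rw [Finset.mul_sum]
      refine Finset.sum_congr rfl fun k _ => ?_
      rw [Complex.real_smul, mul_pow, ← pow_mul, ← pow_mul, mul_comm k m]
      push_cast; ring
    have hinj : Function.Injective (fun j : ℕ => n * j) :=
      fun i j hij => Nat.eq_of_mul_eq_mul_left (Nat.pos_of_ne_zero hn) hij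
    have h3 := (hinj.hasSum_iff (f := fun m => ∑ k ∈ Finset.range n,
      ((n : ℝ)⁻¹) • (c m * (ζ ^ k * w) ^ m)) ?_).2 h1
    · convert h3 using 2 with j
      simp only [Function.comp]
      rw [h2, pow_mul ζ, hζ.pow_eq_one, pow_mul w]
      simp
      field_simp
    -- The sum over the roots of unity vanishes unless `n ∣ m`.
    · intro m hm
      have hm' : ¬ n ∣ m := fun ⟨j, hj⟩ => hm ⟨j, hj.symm⟩
      have hne : ζ ^ m ≠ 1 := fun h => hm' ((hζ.pow_eq_one_iff_dvd m).1 h)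
      rw [h2, geom_sum_eq hne, ← pow_mul, mul_comm m n, pow_mul, hζ.pow_eq_one]
      simp
  -- Every `v` in the disk is an `n`-th power, so `key` shows that this series converges there.
  set B : ℂ → ℂ := fun v => ∑' j, c (n * j) * v ^ j with hB
  have hroot : ∀ v : ℂ, ‖v‖ < 1 → ∃ w : ℂ, ‖w‖ < 1 ∧ w ^ n = v := by
    intro v hv
    obtain ⟨w, hw⟩ := IsAlgClosed.exists_pow_nat_eq v (Nat.pos_of_ne_zero hn)
    refine ⟨w, ?_, hw⟩
    rw [← hw, norm_pow] at hv
    exact (pow_lt_one_iff_of_nonneg (norm_nonneg _) hn).1 hv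
  have hBc : HasCoeffs B (fun j => c (n * j)) := by
    intro v hv
    obtain ⟨w, hw, rfl⟩ := hroot v hv
    exact (key w hw).summable.hasSum
  have hBK : ∀ v : ℂ, ‖v‖ < 1 → B v ∈ K := by
    intro v hv
    obtain ⟨w, hw, rfl⟩ := hroot v hv
    simp only [hB]
    rw [(key w hw).tsum_eq]
    refine hK.sum_mem (fun _ _ => by positivity) ?_ fun k _ => hGK _ (by simpa [hζ1] using hw)
    simp [hn]
  have hB0 : B 0 = c 0 := by simpa using hBc.apply_zero
  have hBd : HasDerivAt B (c n) 0 := by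
    have h1 := hBc.deriv_zero
    simp only [mul_one] at h1
    rw [← h1]
    exact (hBc.differentiableOn.differentiableAt
      (Metric.isOpen_ball.mem_nhds (by simp))).hasDerivAt
  rw [← hB0] at hd hΦ0
  rw [← (hd.comp 0 hBd).deriv]
  refine Complex.norm_deriv_le_one_of_mapsTo_ball (R := 1) ?_ ?_ one_pos
  · intro v hv
    have hv' : ‖v‖ < 1 := by simpa using hv
    exact ((hΦ _ (hBK v hv')).comp v (hBc.differentiableOn.differentiableAt
      (Metric.isOpen_ball.mem_nhds hv))).differentiableWithinAt
  · intro v hv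
    have hv' : ‖v‖ < 1 := by simpa using hv
    simpa [hΦ0] using hΦK _ (hBK v hv')

/-- Carathéodory's coefficient bound for the half-plane `Re > s`: here `Φ w = (w - 1) / (w + 1 - 2 * s)`
is the conformal map of the half-plane onto the disk with `Φ 1 = 0`. -/
theorem coeff_bound_of_halfPlane {G : ℂ → ℂ} {c : ℕ → ℂ} (hG : HasCoeffs G c) {s : ℝ} (hs : s < 1)
    (h0 : c 0 = 1) (hre : ∀ z : ℂ, ‖z‖ < 1 → s < (G z).re) {n : ℕ} (hn : n ≠ 0) :
    ‖c n‖ ≤ 2 * (1 - s) := by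
  have hne : ∀ w : ℂ, s < w.re → w + 1 - 2 * s ≠ 0 := by
    intro w hw h
    have := congrArg Complex.re h
    simp at this
    linarith
  have hd : ∀ w : ℂ, s < w.re → HasDerivAt (fun w : ℂ => (w - 1) / (w + 1 - 2 * s))
      ((1 * (w + 1 - 2 * s) - (w - 1) * 1) / (w + 1 - 2 * s) ^ 2) w := fun w hw =>
    ((hasDerivAt_id w).sub_const 1).div
      (((hasDerivAt_id w).add_const 1).sub_const (2 * (s : ℂ))) (hne w hw)
  have h := coeff_bound_of_convex hG (convex_halfSpace_re_gt s) hre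
    (Φ := fun w => (w - 1) / (w + 1 - 2 * s)) (fun w hw => (hd w hw).differentiableAt) ?_
    (by simp [h0]) (hd (c 0) (by simpa [h0] using hs)) hn
  · have hs' : (0 : ℝ) < 2 * (1 - s) := by linarith
    have hsC : (2 * (1 - s) : ℂ) ≠ 0 := by exact_mod_cast hs'.ne'
    have e : (1 * (c 0 + 1 - 2 * s) - (c 0 - 1) * 1) / (c 0 + 1 - 2 * s) ^ 2 * c n
        = c n / ((2 * (1 - s) : ℝ) : ℂ) := by
      rw [h0]
      push_cast
      have : (1 + 1 - 2 * s : ℂ) = 2 * (1 - s) := by ring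
      rw [this]
      have hs1 : (1 - s : ℂ) ≠ 0 := fun h => hsC (by rw [h, mul_zero])
      field_simp
      ring_nf
    rw [e, norm_div, Complex.norm_real, Real.norm_of_nonneg hs'.le, div_le_one hs'] at h
    exact h
  · intro w hw
    have hw' : s < w.re := hw
    rw [norm_div, div_le_one (norm_pos_iff.2 (hne w hw')), ← abs_of_nonneg (norm_nonneg (w - 1)),
      ← abs_of_nonneg (norm_nonneg (w + 1 - 2 * s)), ← sq_le_sq, Complex.sq_norm, Complex.sq_norm,
      Complex.normSq_apply, Complex.normSq_apply]
    simp
    nlinarith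

/-! ### Inverses of injective holomorphic functions -/

section

open Filter Topology

/-- The inverse of an injective holomorphic function on the disk is holomorphic on the image. It is
continuous by the open mapping theorem and differentiable where `f' ≠ 0`, and the zeros of `f'` are
isolated, so they are removable singularities of the inverse. -/
theorem invFunOn_differentiableAt {f : ℂ → ℂ}
    (hf : AnalyticOnNhd ℂ f (Metric.ball 0 1)) (hinj : Set.InjOn f (Metric.ball 0 1))
    {z : ℂ} (hz : z ∈ Metric.ball (0:ℂ) 1) :
    DifferentiableAt ℂ (Function.invFunOn f (Metric.ball 0 1)) (f z) := by
  set D := Metric.ball (0:ℂ) 1 with hD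
  set Φ := Function.invFunOn f D with hΦ
  have hDo : IsOpen D := Metric.isOpen_ball
  have hl : ∀ x ∈ D, Φ (f x) = x := fun x hx => hinj.leftInvOn_invFunOn hx
  have hnc : ∀ x ∈ D, ¬ ∀ᶠ y in 𝓝 x, f y = f x := by
    intro x hx h
    have h1 : ∀ᶠ y in 𝓝 x, y = x := by
      filter_upwards [h, hDo.mem_nhds hx] with y hy hyD using hinj hyD hx hy
    have h2 : ∀ᶠ y in 𝓝[≠] x, False := by
      filter_upwards [h1.filter_mono nhdsWithin_le_nhds, self_mem_nhdsWithin] with y hy hy'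
        using hy' hy
    simpa using h2.exists
  have hopen : ∀ x ∈ D, 𝓝 (f x) ≤ map f (𝓝 x) := fun x hx =>
    (hf x hx).eventually_constant_or_nhds_le_map_nhds.resolve_left (hnc x hx)
  have hcont : ∀ x ∈ D, ContinuousAt Φ (f x) := by
    intro x hx
    have : Tendsto Φ (map f (𝓝 x)) (𝓝 x) := by
      rw [tendsto_map'_iff]
      refine tendsto_id.congr' ?_
      filter_upwards [hDo.mem_nhds hx] with y hy using (hl y hy).symm
    rw [ContinuousAt, hl x hx]
    exact this.mono_left (hopen x hx)
  have hV : ∀ x ∈ D, f '' D ∈ 𝓝 (f x) := fun x hx =>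
    hopen x hx (image_mem_map (hDo.mem_nhds hx))
  have hr : ∀ x ∈ D, ∀ᶠ w in 𝓝 (f x), f (Φ w) = w := by
    intro x hx
    filter_upwards [hV x hx]
    rintro _ ⟨y, hy, rfl⟩
    rw [hl y hy]
  have hreg : ∀ x ∈ D, deriv f x ≠ 0 → DifferentiableAt ℂ Φ (f x) := by
    intro x hx hx0
    refine (HasDerivAt.of_local_left_inverse (f' := deriv f x) (hcont x hx) ?_ hx0
      (hr x hx)).differentiableAt
    rw [hl x hx]
    exact (hf x hx).differentiableAt.hasDerivAt
  have hev : ∀ᶠ y in 𝓝[≠] z, deriv f y ≠ 0 := by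
    refine (hf z hz).deriv.eventually_eq_zero_or_eventually_ne_zero.resolve_left fun h => ?_
    obtain ⟨ε, hε, hb⟩ := Metric.eventually_nhds_iff_ball.1 (h.and (hDo.mem_nhds hz))
    refine hnc z hz ?_
    filter_upwards [Metric.ball_mem_nhds z hε] with y hy
    refine (convex_ball z ε).is_const_of_fderivWithin_eq_zero (𝕜 := ℂ) (f := f) ?_ ?_ hy
      (Metric.mem_ball_self hε)
    · exact fun x hx => (hf x (hb x hx).2).differentiableAt.differentiableWithinAt
    · intro x hx
      rw [fderivWithin_of_isOpen Metric.isOpen_ball hx]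
      ext
      simpa using (hb x hx).1
  refine (Complex.analyticAt_of_differentiable_on_punctured_nhds_of_continuousAt ?_
    (hcont z hz)).differentiableAt
  have ht : Tendsto Φ (𝓝[≠] (f z)) (𝓝[≠] z) := by
    refine tendsto_nhdsWithin_iff.2 ⟨?_, ?_⟩
    · have := (hcont z hz).tendsto
      rw [hl z hz] at this
      exact this.mono_left nhdsWithin_le_nhds
    · filter_upwards [(hr z hz).filter_mono nhdsWithin_le_nhds, self_mem_nhdsWithin] with w hw hw'
      intro h
      rw [Set.mem_singleton_iff] at h
      exact hw' (by rw [← hw, h]; rfl)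
  filter_upwards [ht.eventually hev, nhdsWithin_le_nhds (hV z hz)] with w hw hwV
  obtain ⟨y, hy, rfl⟩ := hwV
  rw [hl y hy] at hw
  exact hreg y hy hw

end

/-! ### Coefficients in the classes 𝒫(1/2), 𝒞 and 𝒮*(1/2) -/

theorem coeff_le_one_of_PHalf {f : ℂ → ℂ} {a : ℕ → ℂ} (hp : HasCoeffs (dslope f 0) a)
    (ha0 : a 0 = 1) (hf0 : f 0 = 0) (h : IsClassPHalf f) (n : ℕ) : ‖a n‖ ≤ 1 := by
  rcases eq_or_ne n 0 with rfl | hn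
  · simp [ha0]
  refine (coeff_bound_of_halfPlane hp (s := 1 / 2) (by norm_num) ha0 ?_ hn).trans (by norm_num)
  intro z hz
  rcases eq_or_ne z 0 with rfl | hz0
  · rw [hp.apply_zero, ha0]; norm_num
  · have := h z (by simpa using hz) hz0
    simpa [dslope_of_ne _ hz0, slope_def_field, hf0] using this

/-- Loewner's bound for convex functions: `Φ = f⁻¹` is the map into the disk used in
`coeff_bound_of_convex`, and `Φ' 0 = 1`. -/
theorem coeff_le_one_of_convex {f : ℂ → ℂ} {c : ℕ → ℂ} (hf : HasCoeffs f c)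
    (hc0 : c 0 = 0) (hc1 : c 1 = 1) (hfa : AnalyticOnNhd ℂ f (Metric.ball 0 1))
    (h : IsClassConvex f) {n : ℕ} (hn : n ≠ 0) : ‖c n‖ ≤ 1 := by
  obtain ⟨hinj, hconv⟩ := h
  have h0 : (0 : ℂ) ∈ Metric.ball (0 : ℂ) 1 := by simp
  have hf0 : f 0 = 0 := by rw [hf.apply_zero, hc0]
  set Φ := Function.invFunOn f (Metric.ball 0 1) with hΦ
  have hl : ∀ x ∈ Metric.ball (0 : ℂ) 1, Φ (f x) = x := fun x hx => hinj.leftInvOn_invFunOn hx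
  have hΦd : HasDerivAt Φ (deriv Φ 0) (f 0) := by
    rw [hf0]
    simpa [hf0] using (invFunOn_differentiableAt hfa hinj h0).hasDerivAt
  have hd1 : deriv Φ 0 = 1 := by
    have h1 : HasDerivAt f 1 0 := by
      have := (hfa 0 h0).differentiableAt.hasDerivAt
      rwa [hf.deriv_zero, hc1] at this
    have h2 : HasDerivAt (Φ ∘ f) 1 0 := by
      refine (hasDerivAt_id (0 : ℂ)).congr_of_eventuallyEq ?_
      filter_upwards [Metric.isOpen_ball.mem_nhds h0] with x hx using hl x hx
    simpa using (hΦd.comp 0 h1).unique h2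
  rw [hd1] at hΦd
  have := coeff_bound_of_convex hf hconv (fun z hz => ⟨z, by simpa using hz, rfl⟩) (Φ := Φ) (d := 1)
    ?_ ?_ ?_ ?_ hn
  · simpa using this
  · rintro _ ⟨x, hx, rfl⟩
    exact invFunOn_differentiableAt hfa hinj hx
  · rintro _ ⟨x, hx, rfl⟩
    rw [hl x hx]
    simpa using (mem_ball_zero_iff.1 hx).le
  · simpa [hc0, hf0] using hl 0 h0
  · rwa [hc0, ← hf0]

/-- With `p = f z / z`, the function `Q = z f' / f = f' / p` has coefficients bounded by `1`.
Comparing coefficients in `f' = p * Q` gives `n * a n = ∑ k < n, a k * c (n - k)`, and the bound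
follows by strong induction. -/
theorem coeff_le_one_of_starlikeHalf {f : ℂ → ℂ} {a : ℕ → ℂ} (hp : HasCoeffs (dslope f 0) a)
    (ha0 : a 0 = 1) (hf0 : f 0 = 0) (hf' : HasCoeffs (deriv f) (fun n => (n + 1) * a n))
    (h : IsClassStarlikeHalf f) (n : ℕ) : ‖a n‖ ≤ 1 := by
  obtain ⟨hne, hre⟩ := h
  have hp' : ∀ z : ℂ, z ≠ 0 → dslope f 0 z = f z / z := fun z hz0 => by
    simp [dslope_of_ne _ hz0, slope_def_field, hf0]
  have hpne : ∀ z : ℂ, ‖z‖ < 1 → dslope f 0 z ≠ 0 := by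
    intro z hz
    rcases eq_or_ne z 0 with rfl | hz0
    · rw [hp.apply_zero, ha0]; exact one_ne_zero
    · rw [hp' z hz0]
      exact div_ne_zero (hne z (norm_pos_iff.2 hz0) hz) hz0
  set Q : ℂ → ℂ := fun z => deriv f z / dslope f 0 z with hQ
  have hQc := HasCoeffs.of_differentiableOn (f := Q)
    (hf'.differentiableOn.div hp.differentiableOn fun z hz => hpne z (by simpa using hz))
  set c : ℕ → ℂ := fun n => (n.factorial : ℂ)⁻¹ * iteratedDeriv n Q 0
  have hc0 : c 0 = 1 := by
    rw [← hQc.apply_zero, hQ]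
    simp only
    rw [hp.apply_zero, hf'.apply_zero, ha0]
    simp
  have hc : ∀ m, m ≠ 0 → ‖c m‖ ≤ 1 := by
    intro m hm
    refine (coeff_bound_of_halfPlane hQc (s := 1 / 2) (by norm_num) hc0 ?_ hm).trans (by norm_num)
    intro z hz
    rcases eq_or_ne z 0 with rfl | hz0
    · rw [hQc.apply_zero, hc0]; norm_num
    · have h1 := hre z (by simpa using hz) hz0
      have h2 : Q z = z * deriv f z / f z := by
        simp only [hQ, hp' z hz0]
        rw [div_div_eq_mul_div, mul_comm]
      rwa [h2]
  have hmul : HasCoeffs (deriv f) (fun n => ∑ k ∈ Finset.range (n + 1), a k * c (n - k)) := by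
    intro z hz
    have := hp.mul hQc z hz
    simpa only [hQ, mul_div_cancel₀ _ (hpne z hz)] using this
  have hrec : ∀ n : ℕ, (n : ℂ) * a n = ∑ k ∈ Finset.range n, a k * c (n - k) := by
    intro n
    have := congrFun (hf'.unique hmul) n
    rw [Finset.sum_range_succ, Nat.sub_self, hc0] at this
    linear_combination this
  induction n using Nat.strong_induction_on with
  | _ n ih =>
    rcases Nat.eq_zero_or_pos n with rfl | hn
    · simp [ha0]
    have hn' : (0 : ℝ) < n := by exact_mod_cast hn
    have h1 : (n : ℝ) * ‖a n‖ ≤ n := by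
      calc (n : ℝ) * ‖a n‖ = ‖∑ k ∈ Finset.range n, a k * c (n - k)‖ := by
            rw [← hrec, norm_mul, Complex.norm_natCast]
        _ ≤ ∑ k ∈ Finset.range n, (1 : ℝ) := by
            refine norm_sum_le_of_le _ fun k hk => ?_
            have hk' := Finset.mem_range.1 hk
            rw [norm_mul]
            exact mul_le_one₀ (ih k hk') (norm_nonneg _) (hc _ (by omega))
        _ = n := by simp
    by_contra! hlt
    nlinarith

/-! ### The majorant series -/

/-- The Taylor coefficients of `(-z - 2 log (1 - z)) / z`, which bound those of `g z / z` when
`Re g' > 0`. -/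
noncomputable def majorantCoeff (l : ℕ) : ℝ := if l = 0 then 1 else 2 / (l + 1)

theorem majorantCoeff_nonneg (l : ℕ) : 0 ≤ majorantCoeff l := by
  unfold majorantCoeff; split_ifs <;> positivity

/-- The majorant series `∑ (k + l - 1) β_l r ^ (k + l)` over `(k, l) ≠ (0, 0)`. The full double sum,
whose term at `(0, 0)` is `-1`, equals `-φ(r) / (1 - r) ^ 2`, where `φ(r) = 0` is the equation
satisfied by `r`; adding `1` at `(0, 0)` therefore gives total `1`. -/
theorem hasSum_majorant {r : ℝ} (hr : r ∈ Set.Ioo (0 : ℝ) 1)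
    (hroot : 2 * r - 3 + (2 * (3 * r - 2) / r) * Real.log (1 - r) = 0) :
    HasSum (fun x : ℕ × ℕ => ((x.1 : ℝ) + x.2 - 1) * (r ^ x.1 * (majorantCoeff x.2 * r ^ x.2))
      + if x = (0, 0) then 1 else 0) 1 := by
  obtain ⟨h0, h1⟩ := hr
  have hr1 : ‖r‖ < 1 := by rwa [Real.norm_of_nonneg h0.le]
  have hA := hasSum_geometric_of_lt_one h0.le h1
  have hA' := hasSum_coe_mul_geometric_of_norm_lt_one hr1
  have hL : HasSum (fun n : ℕ => 2 / ((n : ℝ) + 1) * r ^ n) (2 * (-Real.log (1 - r)) / r) := by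
    have := ((Real.hasSum_pow_div_log_of_abs_lt_one hr1).mul_left 2).div_const r
    have e : (fun n : ℕ => 2 / ((n : ℝ) + 1) * r ^ n) =
        fun n : ℕ => 2 * (r ^ (n + 1) / ((n : ℝ) + 1)) / r := by
      ext n
      rw [pow_succ]
      field_simp
    rwa [e]
  have hB : HasSum (fun n => majorantCoeff n * r ^ n) (2 * (-Real.log (1 - r)) / r - 1) := by
    have e : (fun n => majorantCoeff n * r ^ n) =
        fun n : ℕ => 2 / ((n : ℝ) + 1) * r ^ n - if n = 0 then 1 else 0 := by
      ext n
      rcases eq_or_ne n 0 with rfl | hn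
      · norm_num [majorantCoeff]
      · simp [majorantCoeff, hn]
    rw [e]
    exact hL.sub (hasSum_ite_eq 0 1)
  have hB' : HasSum (fun n : ℕ => (n : ℝ) * (majorantCoeff n * r ^ n))
      (2 * (1 - r)⁻¹ - 2 * (-Real.log (1 - r)) / r) := by
    have e : (fun n : ℕ => (n : ℝ) * (majorantCoeff n * r ^ n)) =
        fun n : ℕ => 2 * r ^ n - 2 / ((n : ℝ) + 1) * r ^ n := by
      ext n
      rcases eq_or_ne n 0 with rfl | hn
      · norm_num
      · simp only [majorantCoeff, hn, if_false]
        field_simp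
        ring
    rw [e]
    exact (hA.mul_left 2).sub hL
  have mulS : ∀ {u v : ℕ → ℝ} {s t : ℝ}, HasSum u s → HasSum v t →
      HasSum (fun x : ℕ × ℕ => u x.1 * v x.2) (s * t) := fun hu hv =>
    hu.mul hv (summable_mul_of_summable_norm hu.summable.norm hv.summable.norm)
  have key := (((mulS hA' hB).add (mulS hA hB')).sub (mulS hA hB)).add
    (hasSum_ite_eq ((0, 0) : ℕ × ℕ) (1 : ℝ))
  have h2 : 1 - r ≠ 0 := by linarith
  have h3 : r ≠ 0 := h0.ne'
  have e : r / (1 - r) ^ 2 * (2 * -Real.log (1 - r) / r - 1)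
      + (1 - r)⁻¹ * (2 * (1 - r)⁻¹ - 2 * -Real.log (1 - r) / r)
      - (1 - r)⁻¹ * (2 * -Real.log (1 - r) / r - 1) + 1
      = 1 - (2 * r - 3 + (2 * (3 * r - 2) / r) * Real.log (1 - r)) / (1 - r) ^ 2 := by
    field_simp
    ring
  rw [e, hroot, zero_div, sub_zero] at key
  refine Eq.mp (congrArg (fun T : ℕ × ℕ → ℝ => HasSum T 1) (funext fun x => ?_)) key
  ring

/-- The double series of `3 p q - f' q - p g' - 1`, where `p = f z / z` and `q = g z / z`, has terms
`(1 - k - l) a_k b_l z ^ (k + l)` for `(k, l) ≠ (0, 0)` and no constant term, so it is dominated by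
the majorant series at `‖z‖ < r`. -/
theorem norm_lt_one_of_coeffs {f g : ℂ → ℂ} {a b : ℕ → ℂ} (hf0 : f 0 = 0) (hg0 : g 0 = 0)
    (hp : HasCoeffs (dslope f 0) a) (hq : HasCoeffs (dslope g 0) b)
    (hf' : HasCoeffs (deriv f) (fun n => (n + 1) * a n))
    (hg' : HasCoeffs (deriv g) (fun n => (n + 1) * b n))
    (ha0 : a 0 = 1) (hb0 : b 0 = 1) (ha : ∀ n, ‖a n‖ ≤ 1) (hb : ∀ n, ‖b n‖ ≤ majorantCoeff n)
    {r : ℝ} (hr : r ∈ Set.Ioo (0 : ℝ) 1)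
    (hroot : 2 * r - 3 + (2 * (3 * r - 2) / r) * Real.log (1 - r) = 0)
    {z : ℂ} (hz0 : z ≠ 0) (hz : ‖z‖ < r) :
    ‖3 * (f z / z) * (g z / z) - deriv f z * (g z / z) - (f z / z) * deriv g z - 1‖ < 1 := by
  have hz1 : ‖z‖ < 1 := hz.trans hr.2
  have hP := hp z hz1
  have hQ := hq z hz1
  simp only [dslope_of_ne _ hz0, slope_def_field, hf0, hg0, sub_zero] at hP hQ
  have mulS : ∀ {u v : ℕ → ℂ} {s t : ℂ}, HasSum u s → HasSum v t →
      HasSum (fun x : ℕ × ℕ => u x.1 * v x.2) (s * t) := fun hu hv =>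
    hu.mul hv (summable_mul_of_summable_norm hu.summable.norm hv.summable.norm)
  have hU := ((((mulS hP hQ).mul_left 3).sub (mulS (hf' z hz1) hQ)).sub
    (mulS hP (hg' z hz1))).sub (hasSum_ite_eq ((0, 0) : ℕ × ℕ) (1 : ℂ))
  set T : ℝ → ℕ × ℕ → ℝ := fun ρ x =>
    ((x.1 : ℝ) + x.2 - 1) * (ρ ^ x.1 * (majorantCoeff x.2 * ρ ^ x.2))
      + if x = (0, 0) then 1 else 0 with hT
  have hpos : ∀ x : ℕ × ℕ, x ≠ (0, 0) → (0 : ℝ) ≤ (x.1 : ℝ) + x.2 - 1 := by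
    rintro ⟨k, l⟩ hx
    have : 1 ≤ k + l := by
      by_contra! h
      exact hx (by ext <;> simp <;> omega)
    have : (1 : ℝ) ≤ k + l := by exact_mod_cast this
    simpa using this
  have hTle : ∀ x, T ‖z‖ x ≤ T r x := by
    intro x
    simp only [hT]
    by_cases hx : x = (0, 0)
    · subst hx; simp
    · have := hpos x hx
      have := majorantCoeff_nonneg x.2
      have := hr.1.le
      gcongr
  have hTnn : ∀ x, 0 ≤ T ‖z‖ x := by
    intro x
    simp only [hT]
    by_cases hx : x = (0, 0)
    · subst hx; simp [majorantCoeff]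
    · have := hpos x hx
      have := majorantCoeff_nonneg x.2
      simp only [hx, if_false]
      positivity
  have hTr : HasSum (T r) 1 := hasSum_majorant hr hroot
  have hTz : Summable (T ‖z‖) := Summable.of_nonneg_of_le hTnn hTle hTr.summable
  have hlt : ∑' x, T ‖z‖ x < 1 := by
    -- The term at `(2, 0)` is `ρ ^ 2`, which is strictly increasing in `ρ`.
    refine hasSum_lt (i := (2, 0)) hTle ?_ hTz.hasSum hTr
    simp only [hT, majorantCoeff]
    norm_num
    gcongr
  refine lt_of_le_of_lt ?_ hlt
  rw [mul_assoc, ← hU.tsum_eq]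
  refine tsum_of_norm_bounded hTz.hasSum ?_
  rintro x
  by_cases hx : x = (0, 0)
  · subst hx
    simp [hT, ha0, hb0, majorantCoeff]
    norm_num
  · have e : 3 * (a x.1 * z ^ x.1 * (b x.2 * z ^ x.2))
        - (x.1 + 1) * a x.1 * z ^ x.1 * (b x.2 * z ^ x.2)
        - a x.1 * z ^ x.1 * ((x.2 + 1) * b x.2 * z ^ x.2) - (if x = (0, 0) then 1 else 0)
        = -((((x.1 : ℝ) + x.2 - 1 : ℝ) : ℂ) * ((a x.1 * z ^ x.1) * (b x.2 * z ^ x.2))) := by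
      simp only [hx, if_false]
      push_cast
      ring
    rw [e, norm_neg, norm_mul, Complex.norm_real, Real.norm_of_nonneg (hpos x hx)]
    simp only [hT, hx, if_false, add_zero, norm_mul, norm_pow]
    have h1 := ha x.1
    have h2 := hb x.2
    have h3 := majorantCoeff_nonneg x.2
    have := hpos x hx
    gcongr
    exact mul_le_of_le_one_left (by positivity) h1

theorem radius_univalence_PCS_R
    (f g F : ℂ → ℂ)
    (hfa : AnalyticOnNhd ℂ f (Metric.ball (0:ℂ) 1))
    (hga : AnalyticOnNhd ℂ g (Metric.ball (0:ℂ) 1))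
    (hf0 : f 0 = 0) (hf1 : deriv f 0 = 1) (hg0 : g 0 = 0) (hg1 : deriv g 0 = 1)
    (hfne : ∀ z : ℂ, 0 < ‖z‖ → ‖z‖ < 1 → f z ≠ 0)
    (hgne : ∀ z : ℂ, 0 < ‖z‖ → ‖z‖ < 1 → g z ≠ 0)
    (hfcl : IsClassPHalf f ∨ IsClassConvex f ∨ IsClassStarlikeHalf f)
    (hgR : ∀ z ∈ Metric.ball (0:ℂ) 1, 0 < (deriv g z).re)
    (r4 : ℝ) (hr4mem : r4 ∈ Set.Ioo (0:ℝ) 1)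
    (hr4root : 2 * r4 - 3 + (2 * (3 * r4 - 2) / r4) * Real.log (1 - r4) = 0)
    (hr4uniq : ∀ r ∈ Set.Ioo (0:ℝ) 1, 2 * r - 3 + (2 * (3 * r - 2) / r) * Real.log (1 - r) = 0 → r = r4)
    (hF : ∀ z : ℂ, F z = z ^ 3 / (f z * g z)) :
    ∀ z : ℂ, 0 < ‖z‖ → ‖z‖ < r4 →
      ‖deriv F z * (z / F z) ^ 2 - 1‖ < 1 := by
  intro z hzpos hz
  have hz1 : ‖z‖ < 1 := hz.trans hr4mem.2
  have hz0 : z ≠ 0 := norm_pos_iff.1 hzpos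
  have hzD : z ∈ Metric.ball (0 : ℂ) 1 := by simpa using hz1
  have hfc := HasCoeffs.of_differentiableOn hfa.differentiableOn
  have hgc := HasCoeffs.of_differentiableOn hga.differentiableOn
  set c : ℕ → ℂ := fun n => (n.factorial : ℂ)⁻¹ * iteratedDeriv n f 0
  set d : ℕ → ℂ := fun n => (n.factorial : ℂ)⁻¹ * iteratedDeriv n g 0
  have hc0 : c 0 = 0 := by rw [← hfc.apply_zero, hf0]
  have hc1 : c 1 = 1 := by rw [← hfc.deriv_zero, hf1]
  have hd1 : d 1 = 1 := by rw [← hgc.deriv_zero, hg1]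
  have ha : ∀ n, ‖c (n + 1)‖ ≤ 1 := by
    rcases hfcl with h | h | h
    · exact coeff_le_one_of_PHalf hfc.dslope hc1 hf0 h
    · exact fun n => coeff_le_one_of_convex hfc hc0 hc1 hfa h n.succ_ne_zero
    · exact coeff_le_one_of_starlikeHalf hfc.dslope hc1 hf0 hfc.deriv h
  have hb : ∀ n, ‖d (n + 1)‖ ≤ majorantCoeff n := by
    intro n
    rcases eq_or_ne n 0 with rfl | hn
    · simp [hd1, majorantCoeff]
    have h1 := coeff_bound_of_halfPlane hgc.deriv (s := 0) one_pos (by simp [hd1])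
      (fun z hz => hgR z (by simpa using hz)) hn
    have h2 : (0 : ℝ) < n + 1 := by positivity
    have h3 : ‖((n : ℂ) + 1)‖ = n + 1 := by
      rw [← Nat.cast_succ, Complex.norm_natCast, Nat.cast_succ]
    rw [norm_mul, h3] at h1
    simp only [majorantCoeff, hn, if_false]
    rw [le_div_iff₀ h2]
    linarith
  have hmain := norm_lt_one_of_coeffs hf0 hg0 hfc.dslope hgc.dslope hfc.deriv hgc.deriv
    hc1 hd1 ha hb hr4mem hr4root hz0 hz
  have hfz := hfne z hzpos hz1
  have hgz := hgne z hzpos hz1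
  have hFd : deriv F z = (3 * z ^ 2 * (f z * g z) - z ^ 3 * (deriv f z * g z + f z * deriv g z))
      / (f z * g z) ^ 2 := by
    have h1 := ((hasDerivAt_pow 3 z).div ((hfa z hzD).differentiableAt.hasDerivAt.mul
      (hga z hzD).differentiableAt.hasDerivAt) (mul_ne_zero hfz hgz)).deriv
    have hF' : F = fun z => z ^ 3 / (f z * g z) := funext hF
    rw [hF']
    simpa using! h1
  have e : deriv F z * (z / F z) ^ 2 - 1 =
      3 * (f z / z) * (g z / z) - deriv f z * (g z / z) - (f z / z) * deriv g z - 1 := by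
    rw [hFd, hF z]
    field_simp
    ring
  rw [e]
  exact hmain
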